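/- arXiv:0802.2865 — 2 statements merged into one kernel-verified Lean document; each statement's English description precedes it below -/
import Mathlib

section
/- Let ι be a finite type, V = (ι → ZMod 2), and let U ≤ W be submodules of V with finrank W = finrank U + β for a natural number β. Let s : Set ι and let π : V →ₗ[ZMod 2] ({i // i ∈ s} → ZMod 2) be the linear map restricting a vector to the coordinates in s. Then there exists w ∈ W with w ∉ U and w i = 0 for all i ∈ s, if and only if finrank (W.map π) ≠ finrank (U.map π) + β. -/
theorem aux_rank {E F : Type*} [AddCommGroup E] [Module (ZMod 2) E] [AddCommGroup F]
    [Module (ZMod 2) F] [FiniteDimensional (ZMod 2) E] (p : E →ₗ[ZMod 2] F)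
    (W : Submodule (ZMod 2) E) :
    Module.finrank (ZMod 2) (W.map p) + Module.finrank (ZMod 2) ↥(W ⊓ LinearMap.ker p)
      = Module.finrank (ZMod 2) W := by
  have h := LinearMap.finrank_range_add_finrank_ker (p.domRestrict W)
  rw [LinearMap.range_domRestrict, LinearMap.ker_domRestrict] at h
  rw [← h, ← Submodule.map_comap_subtype, Submodule.finrank_map_subtype_eq]

/-- Rank test for carrying a nonbounding cycle: with `U ≤ W` submodules of
`(ι → ZMod 2)` with `finrank W = finrank U + β`, and `π` the restriction of vectors
to the coordinates in `s`, there exists `w ∈ W` with `w ∉ U` vanishing on all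
coordinates in `s` if and only if `finrank (W.map π) ≠ finrank (U.map π) + β`. -/
theorem exists_nonbounding_cycle_iff_rank_ne
    {ι : Type*} [Fintype ι] (β : ℕ)
    (U W : Submodule (ZMod 2) (ι → ZMod 2)) (hUW : U ≤ W)
    (hrank : Module.finrank (ZMod 2) W = Module.finrank (ZMod 2) U + β)
    (s : Set ι)
    (π : (ι → ZMod 2) →ₗ[ZMod 2] ({i // i ∈ s} → ZMod 2))
    (hπ : ∀ (v : ι → ZMod 2) (i : {i // i ∈ s}), π v i = v i) :
    (∃ w ∈ W, w ∉ U ∧ ∀ i ∈ s, w i = 0) ↔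
      Module.finrank (ZMod 2) (W.map π) ≠ Module.finrank (ZMod 2) (U.map π) + β := by
  have hW := aux_rank π W
  have hU := aux_rank π U
  have hk : ∀ w, w ∈ LinearMap.ker π ↔ ∀ i ∈ s, w i = 0 := by
    intro w
    rw [LinearMap.mem_ker, funext_iff]
    simp [hπ]
  have hle : U ⊓ LinearMap.ker π ≤ W ⊓ LinearMap.ker π := inf_le_inf_right _ hUW
  constructor
  · rintro ⟨w, hw, hwU, hs⟩ he
    have heq : U ⊓ LinearMap.ker π = W ⊓ LinearMap.ker π :=
      Submodule.eq_of_le_of_finrank_eq hle (by omega)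
    have hm : w ∈ W ⊓ LinearMap.ker π := ⟨hw, (hk w).2 hs⟩
    rw [← heq] at hm
    exact hwU hm.1
  · intro hne
    by_contra hcon
    apply hne
    have heq : U ⊓ LinearMap.ker π = W ⊓ LinearMap.ker π := by
      refine le_antisymm hle fun w hw => ⟨?_, hw.2⟩
      by_contra hwU
      exact hcon ⟨w, hw.1, hwU, (hk w).1 hw.2⟩
    rw [← heq] at hW
    omega
end

section
/- There exist a metric space X, a family 𝒞 of nonempty bounded subsets of X, a set z_r ∈ 𝒞 with rad(z_r) ≤ rad(S) for all S ∈ 𝒞 (where rad(S) = ⨅_{p ∈ X} ⨆_{q ∈ S} dist p q), and a set z_d ∈ 𝒞 with Metric.diam z_d ≤ Metric.diam S for all S ∈ 𝒞, such that 0 < Metric.diam z_d and Metric.diam z_r = 2 * Metric.diam z_d. -/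
/-- The radius of a subset `S` of a metric space: the infimum over centers `p` of the
supremum over `q ∈ S` of `dist p q`. -/
noncomputable def setRad {X : Type*} [MetricSpace X] (S : Set X) : ℝ :=
  ⨅ p : X, ⨆ q ∈ S, dist p q

theorem setRad_zr_le : setRad ({0, 2} : Set ℤ) ≤ 1 := by
  unfold setRad
  refine (ciInf_le ⟨0, ?_⟩ (1 : ℤ)).trans ?_
  · rintro _ ⟨p, rfl⟩
    exact Real.iSup_nonneg fun q => Real.iSup_nonneg fun _ => dist_nonneg
  · refine Real.iSup_le (fun q => Real.iSup_le (fun hq => ?_) zero_le_one) zero_le_one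
    rcases hq with rfl | rfl <;> norm_num [Int.dist_eq]

theorem le_setRad_zd : 1 ≤ setRad ({0, 1} : Set ℤ) := by
  unfold setRad
  refine le_ciInf fun p => ?_
  have hb : BddAbove (Set.range fun q : ℤ => ⨆ _ : q ∈ ({0, 1} : Set ℤ), dist p q) := by
    refine ⟨dist p 0 + dist p 1, ?_⟩
    rintro _ ⟨q, rfl⟩
    have h0 : 0 ≤ dist p 0 := dist_nonneg
    have h1 : 0 ≤ dist p 1 := dist_nonneg
    refine Real.iSup_le (fun hq => ?_) (by positivity)
    rcases hq with rfl | rfl <;> linarith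
  have key : ∀ q ∈ ({0, 1} : Set ℤ), p ≠ q →
      1 ≤ ⨆ q : ℤ, ⨆ _ : q ∈ ({0, 1} : Set ℤ), dist p q := by
    intro q hq hne
    refine le_trans ?_ (le_ciSup hb q)
    simp only [ciSup_pos hq]
    exact Int.pairwise_one_le_dist hne
  by_cases hp : p = 0
  · exact key 1 (by simp) (by omega)
  · exact key 0 (by simp) hp

/-- Tightness of the bound `diam z_r ≤ 2 * diam z_d`: there are a metric space, a
family `𝒞` of nonempty bounded subsets, a minimal-radius member `z_r` and a
minimal-diameter member `z_d` with `0 < diam z_d` and `diam z_r = 2 * diam z_d`. -/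
theorem exists_diam_minRadius_eq_two_mul_diam_minDiam :
    ∃ (X : Type) (_ : MetricSpace X) (𝒞 : Set (Set X)) (zr zd : Set X),
      (∀ S ∈ 𝒞, S.Nonempty ∧ Bornology.IsBounded S) ∧
      zr ∈ 𝒞 ∧ zd ∈ 𝒞 ∧
      (∀ S ∈ 𝒞, setRad zr ≤ setRad S) ∧
      (∀ S ∈ 𝒞, Metric.diam zd ≤ Metric.diam S) ∧
      0 < Metric.diam zd ∧
      Metric.diam zr = 2 * Metric.diam zd := by
  have hr : Metric.diam ({0, 2} : Set ℤ) = 2 := by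
    rw [Metric.diam_pair]; norm_num [Int.dist_eq]
  have hd : Metric.diam ({0, 1} : Set ℤ) = 1 := by
    rw [Metric.diam_pair]; norm_num [Int.dist_eq]
  refine ⟨ℤ, inferInstance, {{0, 2}, {0, 1}}, {0, 2}, {0, 1}, ?_, by simp, by simp, ?_, ?_, ?_, ?_⟩
  · rintro S (rfl | rfl)
    · exact ⟨⟨0, by simp⟩, (Set.toFinite _).isBounded⟩
    · exact ⟨⟨0, by simp⟩, (Set.toFinite _).isBounded⟩
  · rintro S (rfl | rfl)
    · exact le_rfl
    · exact setRad_zr_le.trans le_setRad_zd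
  · rintro S (rfl | rfl)
    · rw [hr, hd]; norm_num
    · exact le_rfl
  · rw [hd]; norm_num
  · rw [hr, hd]; norm_num
end
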